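/- Let T be a totally ergodic automorphism of a standard Borel probability space (X,μ) with discrete spectrum, i.e., the linear span of the eigenfunctions of T is dense in L²(X,μ). Then T has the AOP property. -/

import Mathlib

open MeasureTheory Filter

/-- `T` is totally ergodic: every nonzero power of `T` is ergodic. -/
def TotallyErgodic {X : Type*} [MeasurableSpace X] (T : X → X) (μ : Measure X) : Prop :=
  ∀ m : ℕ, m ≠ 0 → Ergodic (T^[m]) μ

/-- `(X,μ,T)` has asymptotically orthogonal powers (AOP). -/
def AOP {X : Type*} [MeasurableSpace X] (T : X → X) (μ : Measure X) : Prop :=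
  ∀ f g : X → ℂ, MemLp f 2 μ → MemLp g 2 μ →
    (∫ x, f x ∂μ) = 0 → (∫ x, g x ∂μ) = 0 →
    ∀ ε > (0:ℝ), ∃ N : ℕ, ∀ r s : ℕ, r.Prime → s.Prime → r ≠ s → N ≤ r → N ≤ s →
      ∀ κ : Measure (X × X), IsProbabilityMeasure κ →
        κ.map Prod.fst = μ → κ.map Prod.snd = μ →
        Ergodic (Prod.map (T^[r]) (T^[s])) κ →
        ‖∫ p, f p.1 * (starRingEnd ℂ) (g p.2) ∂κ‖ ≤ ε

/-- `(X,μ,T)` has discrete spectrum: the linear span of the eigenfunctions of `T`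
(nonzero `g ∈ L²(μ)` with `g ∘ T = c · g` a.e. for some `c ∈ ℂ`) is dense in `L²(X,μ)`. -/
def DiscreteSpectrum {X : Type*} [MeasurableSpace X] (T : X → X) (μ : Measure X) : Prop :=
  Dense ((Submodule.span ℂ
      {g : Lp ℂ 2 μ | g ≠ 0 ∧ ∃ c : ℂ,
        (fun x => (g : X → ℂ) (T x)) =ᵐ[μ] (fun x => c * (g : X → ℂ) x)} :
          Submodule ℂ (Lp ℂ 2 μ)) : Set (Lp ℂ 2 μ))

open scoped InnerProductSpace ComplexConjugate Topology

/-- If an equibounded family of additive, absolutely homogeneous functionals tends to zero on a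
set with dense span, then it tends to zero everywhere. -/
theorem tendsto_zero_of_dense_span {ι E : Type*} [NormedAddCommGroup E] [NormedSpace ℂ E]
    {l : Filter ι} {L : ι → E → ℂ} {C : ℝ} {S : Set E}
    (hadd : ∀ i x y, L i (x + y) = L i x + L i y)
    (hsmul : ∀ i (c : ℂ) x, ‖L i (c • x)‖ = ‖c‖ * ‖L i x‖)
    (hbound : ∀ i x, ‖L i x‖ ≤ C * ‖x‖)
    (hS : Dense (Submodule.span ℂ S : Set E))
    (h : ∀ x ∈ S, Tendsto (fun i => L i x) l (𝓝 0)) (x : E) :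
    Tendsto (fun i => L i x) l (𝓝 0) := by
  have hspan : ∀ y ∈ Submodule.span ℂ S, Tendsto (fun i => L i y) l (𝓝 0) := by
    intro y hy
    induction hy using Submodule.span_induction with
    | mem y hy => exact h y hy
    | zero =>
      have : ∀ i, L i 0 = 0 := fun i => by simpa using hbound i 0
      simpa [this] using tendsto_const_nhds
    | add y z _ _ hy hz => simpa [hadd] using hy.add hz
    | smul c y _ hy =>
      rw [tendsto_zero_iff_norm_tendsto_zero] at hy ⊢
      simpa [hsmul] using hy.const_mul ‖c‖
  rw [Metric.tendsto_nhds]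
  intro ε hε
  obtain ⟨y, hy, hxy⟩ := Metric.dense_iff.1 hS x (ε / (2 * (|C| + 1))) (by positivity)
  filter_upwards [Metric.tendsto_nhds.1 (hspan y hxy) (ε / 2) (by positivity)] with i hi
  rw [dist_zero_right] at hi ⊢
  rw [Metric.mem_ball, dist_comm, dist_eq_norm, lt_div_iff₀ (by positivity)] at hy
  have hdecomp : L i x = L i (x - y) + L i y := by rw [← hadd, sub_add_cancel]
  have hle : C * ‖x - y‖ ≤ |C| * ‖x - y‖ := by gcongr; exact le_abs_self C
  have hnn := norm_nonneg (x - y)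
  calc ‖L i x‖ ≤ ‖L i (x - y)‖ + ‖L i y‖ := hdecomp ▸ norm_add_le _ _
    _ < ε := by linarith [hbound i (x - y)]

/-- If `c` is not a root of unity, then `c ^ r = d ^ s` has at most one solution in pairs of
distinct primes; in particular it has none for large `r`. -/
theorem exists_forall_prime_pow_ne_pow {c d : ℂ} (hc0 : c ≠ 0)
    (hc : ∀ m : ℕ, m ≠ 0 → c ^ m ≠ 1) :
    ∃ N : ℕ, ∀ r s : ℕ, r.Prime → s.Prime → r ≠ s → N ≤ r → c ^ r ≠ d ^ s := by
  have hinj : ∀ a b : ℕ, c ^ a = c ^ b → a ≤ b := by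
    intro a b hab
    by_contra! hlt
    refine hc (a - b) (by omega) (mul_left_cancel₀ (pow_ne_zero b hc0) ?_)
    rw [← pow_add, Nat.add_sub_cancel' hlt.le, hab, mul_one]
  by_contra! H
  obtain ⟨r, s, hr, hs, hrs, -, h⟩ := H 0
  obtain ⟨r', s', hr', hs', -, hN, h'⟩ := H (r + 1)
  have hpow : c ^ (r * s') = c ^ (r' * s) := by
    rw [pow_mul, pow_mul, h, h', ← pow_mul, ← pow_mul, mul_comm]
  have hmul : r * s' = r' * s := le_antisymm (hinj _ _ hpow) (hinj _ _ hpow.symm)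
  rcases hr.dvd_mul.1 (Dvd.intro s' hmul) with hdvd | hdvd
  · have := (Nat.prime_dvd_prime_iff_eq hr hr').1 hdvd
    omega
  · exact hrs ((Nat.prime_dvd_prime_iff_eq hr hs).1 hdvd)

section Eigenfunctions

variable {X : Type*} [MeasurableSpace X] {μ : Measure X} {T : X → X} {c : ℂ}

theorem MeasureTheory.MeasurePreserving.ae_eq_iterate_of_ae_eq_mul
    (hT : MeasurePreserving T μ μ) {u : X → ℂ} (hu : u ∘ T =ᵐ[μ] fun x => c * u x) (n : ℕ) :
    u ∘ T^[n] =ᵐ[μ] fun x => c ^ n * u x := by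
  induction n with
  | zero => simp
  | succ n ih =>
    filter_upwards [hT.quasiMeasurePreserving.ae_eq_comp ih, hu] with x hx hux
    simp only [Function.comp_apply, Function.iterate_succ_apply] at hx hux ⊢
    rw [hx, hux]
    ring

theorem MeasureTheory.Lp.compMeasurePreserving_eq_smul {Y : Type*} [MeasurableSpace Y] {κ : Measure Y}
    {S : Y → Y} {π : Y → X} {R : X → X} (hS : MeasurePreserving S κ κ)
    (hπ : MeasurePreserving π κ μ) (hcomm : π ∘ S = R ∘ π) (u : Lp ℂ 2 μ)
    (hu : u ∘ R =ᵐ[μ] fun x => c * u x) :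
    Lp.compMeasurePreservingₗᵢ ℂ S hS (Lp.compMeasurePreservingₗᵢ ℂ π hπ u) =
      c • Lp.compMeasurePreservingₗᵢ ℂ π hπ u := by
  have h₁ := Lp.coeFn_compMeasurePreserving u hπ
  refine Lp.ext ?_
  filter_upwards [Lp.coeFn_compMeasurePreserving (Lp.compMeasurePreserving π hπ u) hS,
    hS.quasiMeasurePreserving.ae_eq_comp h₁, h₁,
    hπ.quasiMeasurePreserving.ae_eq_comp hu,
    Lp.coeFn_smul c (Lp.compMeasurePreserving π hπ u)] with x e₁ e₂ e₃ e₄ e₅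
  have hx := congrFun hcomm x
  simp only [Function.comp_apply, Pi.smul_apply, smul_eq_mul] at e₁ e₂ e₃ e₄ e₅ hx
  refine (e₁.trans e₂).trans (Eq.trans ?_ e₅.symm)
  rw [hx, e₄, e₃]

theorem MeasureTheory.Lp.compMeasurePreserving_self_eq_smul (hT : MeasurePreserving T μ μ)
    (u : Lp ℂ 2 μ) (hu : u ∘ T =ᵐ[μ] fun x => c * u x) :
    Lp.compMeasurePreservingₗᵢ ℂ T hT u = c • u := by
  have hid : Lp.compMeasurePreservingₗᵢ ℂ id (MeasurePreserving.id μ) u = u :=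
    Lp.compMeasurePreserving_id_apply u
  simpa only [hid] using Lp.compMeasurePreserving_eq_smul hT (MeasurePreserving.id μ) rfl u hu

theorem MeasureTheory.Lp.norm_eigenvalue_eq_one (hT : MeasurePreserving T μ μ) {u : Lp ℂ 2 μ} (hu0 : u ≠ 0)
    (hu : u ∘ T =ᵐ[μ] fun x => c * u x) : ‖c‖ = 1 := by
  have h := congrArg norm (Lp.compMeasurePreserving_self_eq_smul hT u hu)
  rw [norm_smul, LinearIsometry.norm_map] at h
  exact (mul_right_cancel₀ (norm_ne_zero_iff.2 hu0) ((one_mul _).trans h)).symm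

variable [IsProbabilityMeasure μ]

theorem MeasureTheory.Lp.eq_smul_const_of_ae_eq_comp (hT : Ergodic T μ) (u : Lp ℂ 2 μ)
    (hu : u ∘ T =ᵐ[μ] u) : ∃ a : ℂ, u = a • Lp.const 2 μ (1 : ℂ) := by
  obtain ⟨a, ha⟩ := hT.ae_eq_const_of_ae_eq_comp_ae (Lp.aestronglyMeasurable u) hu
  refine ⟨a, Lp.ext ?_⟩
  filter_upwards [ha, Lp.coeFn_smul a (Lp.const 2 μ (1 : ℂ))] with x h₁ h₂
  simp [h₁, h₂]

/-- For a totally ergodic transformation, an eigenfunction is either constant or its eigenvalue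
is not a root of unity. -/
theorem TotallyErgodic.eq_smul_const_or_pow_ne_one (hT : TotallyErgodic T μ) (u : Lp ℂ 2 μ)
    (hu : u ∘ T =ᵐ[μ] fun x => c * u x) :
    (∃ a : ℂ, u = a • Lp.const 2 μ (1 : ℂ)) ∨ ∀ m : ℕ, m ≠ 0 → c ^ m ≠ 1 := by
  by_contra! H
  obtain ⟨hconst, m, hm, hcm⟩ := H
  have hTm : MeasurePreserving T μ μ := (hT 1 one_ne_zero).toMeasurePreserving
  obtain ⟨a, ha⟩ := Lp.eq_smul_const_of_ae_eq_comp (hT m hm) u <| by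
    simpa [hcm] using hTm.ae_eq_iterate_of_ae_eq_mul hu m
  exact hconst a ha

end Eigenfunctions

theorem LinearIsometry.inner_eq_zero_of_eigenvectors {E : Type*} [NormedAddCommGroup E]
    [InnerProductSpace ℂ E] (W : E →ₗᵢ[ℂ] E) {x y : E} {a b : ℂ} (hx : W x = a • x)
    (hy : W y = b • y) (ha : ‖a‖ = 1) (hab : b ≠ a) : ⟪x, y⟫_ℂ = 0 := by
  by_contra hne
  have h := W.inner_map_map x y
  rw [hx, hy, inner_smul_left, inner_smul_right, ← mul_assoc] at h
  have h1 : conj a * b = 1 := mul_right_cancel₀ hne (h.trans (one_mul _).symm)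
  have h2 : a * conj a = 1 := by rw [Complex.mul_conj']; simp [ha]
  apply hab
  calc b = a * conj a * b := by rw [h2, one_mul]
    _ = a := by rw [mul_assoc, h1, mul_one]

section Joinings

variable {X : Type*} [MeasurableSpace X]

/-- A joining of two powers of `T` whose exponents are distinct primes. -/
structure PrimePowerJoining (T : X → X) (μ : Measure X) where
  /-- the first exponent -/
  r : ℕ
  /-- the second exponent -/
  s : ℕ
  /-- the joining -/
  κ : Measure (X × X)
  prime_r : r.Prime
  prime_s : s.Prime
  ne : r ≠ s
  fst : MeasurePreserving Prod.fst κ μ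
  snd : MeasurePreserving Prod.snd κ μ
  map : MeasurePreserving (Prod.map T^[r] T^[s]) κ κ

namespace PrimePowerJoining

variable {T : X → X} {μ : Measure X} [IsProbabilityMeasure μ] (J : PrimePowerJoining T μ)

/-- The filter of prime power joinings along which both exponents tend to infinity. -/
def exponentsAtTop (T : X → X) (μ : Measure X) : Filter (PrimePowerJoining T μ) :=
  comap (fun J => min J.r J.s) atTop

/-- The covariance `∫ f(x) conj(g(y)) dκ - ∫ f dμ · conj(∫ g dμ)` with respect to a joining. -/
noncomputable def cov (f g : Lp ℂ 2 μ) : ℂ :=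
  ⟪Lp.compMeasurePreservingₗᵢ ℂ Prod.snd J.snd g,
    Lp.compMeasurePreservingₗᵢ ℂ Prod.fst J.fst f⟫_ℂ -
  ⟪g, Lp.const 2 μ (1 : ℂ)⟫_ℂ * ⟪Lp.const 2 μ (1 : ℂ), f⟫_ℂ

theorem cov_add_left (f f' g : Lp ℂ 2 μ) : J.cov (f + f') g = J.cov f g + J.cov f' g := by
  simp only [cov, map_add, inner_add_right]
  ring

theorem cov_add_right (f g g' : Lp ℂ 2 μ) : J.cov f (g + g') = J.cov f g + J.cov f g' := by
  simp only [cov, map_add, inner_add_left]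
  ring

theorem cov_smul_left (a : ℂ) (f g : Lp ℂ 2 μ) : J.cov (a • f) g = a * J.cov f g := by
  simp only [cov, map_smul, inner_smul_right]
  ring

theorem cov_smul_right (a : ℂ) (f g : Lp ℂ 2 μ) : J.cov f (a • g) = conj a * J.cov f g := by
  simp only [cov, map_smul, inner_smul_left]
  ring

theorem norm_cov_le (f g : Lp ℂ 2 μ) : ‖J.cov f g‖ ≤ 2 * ‖f‖ * ‖g‖ := by
  have h1 : ‖Lp.const 2 μ (1 : ℂ)‖ = 1 := by simp [Lp.norm_const]
  have hκ := norm_inner_le_norm (𝕜 := ℂ) (Lp.compMeasurePreservingₗᵢ ℂ Prod.snd J.snd g)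
    (Lp.compMeasurePreservingₗᵢ ℂ Prod.fst J.fst f)
  have hg := norm_inner_le_norm (𝕜 := ℂ) g (Lp.const 2 μ (1 : ℂ))
  have hf := norm_inner_le_norm (𝕜 := ℂ) (Lp.const 2 μ (1 : ℂ)) f
  rw [LinearIsometry.norm_map, LinearIsometry.norm_map] at hκ
  rw [h1, mul_one] at hg
  rw [h1, one_mul] at hf
  calc ‖J.cov f g‖ ≤ ‖g‖ * ‖f‖ + ‖g‖ * ‖f‖ := by
        refine (norm_sub_le _ _).trans (add_le_add hκ ?_)
        rw [norm_mul]
        gcongr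
    _ = 2 * ‖f‖ * ‖g‖ := by ring

theorem inner_const_one_const_one :
    ⟪Lp.const 2 μ (1 : ℂ), Lp.const 2 μ (1 : ℂ)⟫_ℂ = 1 := by
  rw [inner_self_eq_norm_sq_to_K]
  simp [Lp.norm_const]

theorem compMeasurePreserving_fst_const_one :
    Lp.compMeasurePreservingₗᵢ ℂ Prod.fst J.fst (Lp.const 2 μ (1 : ℂ)) =
      Lp.compMeasurePreservingₗᵢ ℂ Prod.snd J.snd (Lp.const 2 μ (1 : ℂ)) :=
  rfl

theorem cov_const_left (g : Lp ℂ 2 μ) : J.cov (Lp.const 2 μ (1 : ℂ)) g = 0 := by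
  rw [cov, compMeasurePreserving_fst_const_one, LinearIsometry.inner_map_map,
    inner_const_one_const_one, mul_one, sub_self]

theorem cov_eq_zero_of_eigenfunctions (hT : MeasurePreserving T μ μ) {u v : Lp ℂ 2 μ} {c d : ℂ}
    (hu : u ∘ T =ᵐ[μ] fun x => c * u x) (hv : v ∘ T =ᵐ[μ] fun x => d * v x)
    (hc : c ≠ 1) (hd : ‖d‖ = 1) (hcd : c ^ J.r ≠ d ^ J.s) : J.cov u v = 0 := by
  have hκ := LinearIsometry.inner_eq_zero_of_eigenvectors
    (Lp.compMeasurePreservingₗᵢ (E := ℂ) (p := 2) ℂ _ J.map)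
    (Lp.compMeasurePreserving_eq_smul J.map J.snd rfl v (hT.ae_eq_iterate_of_ae_eq_mul hv J.s))
    (Lp.compMeasurePreserving_eq_smul J.map J.fst rfl u (hT.ae_eq_iterate_of_ae_eq_mul hu J.r))
    (by simp [hd]) hcd
  have hone : ⟪Lp.const 2 μ (1 : ℂ), u⟫_ℂ = 0 :=
    LinearIsometry.inner_eq_zero_of_eigenvectors (a := 1)
      (Lp.compMeasurePreservingₗᵢ (E := ℂ) (p := 2) ℂ _ hT)
      ((one_smul ℂ (Lp.const 2 μ (1 : ℂ))).symm ▸ rfl)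
      (Lp.compMeasurePreserving_self_eq_smul hT u hu) (by simp) hc
  rw [cov, hκ, hone, mul_zero, sub_self]

theorem tendsto_cov_of_eigenfunctions (hT : TotallyErgodic T μ) {u v : Lp ℂ 2 μ} {c d : ℂ}
    (hu0 : u ≠ 0) (hv0 : v ≠ 0)
    (hu : u ∘ T =ᵐ[μ] fun x => c * u x) (hv : v ∘ T =ᵐ[μ] fun x => d * v x) :
    Tendsto (fun J : PrimePowerJoining T μ => J.cov u v) (exponentsAtTop T μ) (𝓝 0) := by
  have hTm : MeasurePreserving T μ μ := (hT 1 one_ne_zero).toMeasurePreserving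
  rcases hT.eq_smul_const_or_pow_ne_one u hu with ⟨a, rfl⟩ | hc
  · simpa [cov_smul_left, cov_const_left] using tendsto_const_nhds
  · have hc0 : c ≠ 0 := norm_ne_zero_iff.1 (by simp [Lp.norm_eigenvalue_eq_one hTm hu0 hu])
    obtain ⟨N, hN⟩ := exists_forall_prime_pow_ne_pow (d := d) hc0 hc
    refine tendsto_const_nhds.congr' ?_
    filter_upwards [preimage_mem_comap (eventually_ge_atTop N)] with J hJ
    exact (J.cov_eq_zero_of_eigenfunctions hTm hu hv (by simpa using hc 1 one_ne_zero)
      (Lp.norm_eigenvalue_eq_one hTm hv0 hv)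
      (hN _ _ J.prime_r J.prime_s J.ne (le_trans hJ (min_le_left _ _)))).symm

theorem tendsto_cov (hT : TotallyErgodic T μ) (hds : DiscreteSpectrum T μ) (f g : Lp ℂ 2 μ) :
    Tendsto (fun J : PrimePowerJoining T μ => J.cov f g) (exponentsAtTop T μ) (𝓝 0) := by
  refine tendsto_zero_of_dense_span (L := fun (J : PrimePowerJoining T μ) f => J.cov f g) (C := 2 * ‖g‖)
    (fun J f f' => J.cov_add_left f f' g) (fun J a f => by rw [cov_smul_left, norm_mul])
    (fun J f => (J.norm_cov_le f g).trans_eq (by ring)) hds ?_ f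
  rintro u ⟨hu0, c, hu⟩
  refine tendsto_zero_of_dense_span (L := fun (J : PrimePowerJoining T μ) g => J.cov u g) (C := 2 * ‖u‖)
    (fun J g g' => J.cov_add_right u g g')
    (fun J a g => by rw [cov_smul_right, norm_mul, RCLike.norm_conj])
    (fun J g => J.norm_cov_le u g) hds ?_ g
  rintro v ⟨hv0, d, hv⟩
  exact tendsto_cov_of_eigenfunctions hT hu0 hv0 hu hv

theorem cov_toLp {f g : X → ℂ} (hf : MemLp f 2 μ) (hg : MemLp g 2 μ) (hf0 : ∫ x, f x ∂μ = 0) :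
    J.cov (hf.toLp f) (hg.toLp g) = ∫ p, f p.1 * conj (g p.2) ∂J.κ := by
  have hone : ⟪Lp.const 2 μ (1 : ℂ), hf.toLp f⟫_ℂ = 0 := by
    rw [L2.inner_def, ← hf0]
    refine integral_congr_ae ?_
    filter_upwards [hf.coeFn_toLp] with x hx
    simp [hx]
  rw [cov, hone, mul_zero, sub_zero, L2.inner_def]
  refine integral_congr_ae ?_
  filter_upwards [(hf.comp_measurePreserving J.fst).coeFn_toLp,
    (hg.comp_measurePreserving J.snd).coeFn_toLp] with p h₁ h₂
  exact congrArg₂ (fun a b => a * conj b) h₁ h₂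

end PrimePowerJoining

end Joinings

/-- A totally ergodic automorphism of a standard Borel probability space with discrete
spectrum has the AOP property. -/
theorem aop_of_discreteSpectrum
    {X : Type*} [MeasurableSpace X] [StandardBorelSpace X]
    (μ : Measure X) [IsProbabilityMeasure μ] (T : X ≃ᵐ X)
    (hT : MeasurePreserving T μ μ)
    (hTerg : TotallyErgodic (⇑T) μ)
    (hds : DiscreteSpectrum (⇑T) μ) :
    AOP (⇑T) μ := by
  intro f g hf hg hf0 _ ε hε
  have h := Metric.tendsto_nhds.1
    (PrimePowerJoining.tendsto_cov hTerg hds (hf.toLp f) (hg.toLp g)) ε hε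
  obtain ⟨t, ht, hsub⟩ := mem_comap.1 h
  obtain ⟨N, hN⟩ := mem_atTop_sets.1 ht
  refine ⟨N, fun r s hr hs hrs hNr hNs κ _ hfst hsnd hκ => ?_⟩
  let J : PrimePowerJoining T μ :=
    ⟨r, s, κ, hr, hs, hrs, ⟨measurable_fst, hfst⟩, ⟨measurable_snd, hsnd⟩, hκ.toMeasurePreserving⟩
  have hJ : dist (J.cov (hf.toLp f) (hg.toLp g)) 0 < ε :=
    hsub (show J ∈ _ from hN _ (le_min hNr hNs))
  rw [dist_zero_right, J.cov_toLp hf hg hf0] at hJ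
  exact hJ.le
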